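/- Let Γ be a connected graph. There exists an integer t ≥ 1 with depth R/I^{(t)} = 1 if and only if Γ has two disjoint maximal independent sets F, G such that the induced subgraph Γ_{F∪G} is connected. Moreover, in this case depth R/I^{(t)} = 1 for every t ≥ |F| + |G|. -/

import Mathlib

open MvPolynomial

noncomputable section

/-- The edge ideal of a graph `Γ` on vertex set `σ`, in `k[x_i : i ∈ σ]`. -/
def edgeIdeal (k : Type) [Field k] {σ : Type} (Γ : SimpleGraph σ) :
    Ideal (MvPolynomial σ k) :=
  Ideal.span { m | ∃ i j : σ, Γ.Adj i j ∧ m = X i * X j }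

/-- The maximal graded ideal `(x_i : i ∈ σ)` of `k[x_i : i ∈ σ]`. -/
def maxIdeal (k : Type) [Field k] (σ : Type) : Ideal (MvPolynomial σ k) :=
  Ideal.span (Set.range (X : σ → MvPolynomial σ k))

/-- `depth R/J = 0`, i.e. the maximal graded ideal is an associated prime of `R/J`. -/
def DepthZero (k : Type) [Field k] {σ : Type} (J : Ideal (MvPolynomial σ k)) : Prop :=
  maxIdeal k σ ∈ associatedPrimes (MvPolynomial σ k) (MvPolynomial σ k ⧸ J)

/-- The `i`-th local cohomology of `R/J` with support in the maximal graded ideal. -/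
def locCoh (k : Type) [Field k] {σ : Type} (J : Ideal (MvPolynomial σ k)) (i : ℕ) :=
  (localCohomology (maxIdeal k σ) i).obj (ModuleCat.of _ (MvPolynomial σ k ⧸ J))

/-- `depth R/J`, defined as the least `i` with `H^i_m(R/J) ≠ 0`. -/
def rDepth (k : Type) [Field k] {σ : Type} (J : Ideal (MvPolynomial σ k)) : ℕ :=
  sInf { i | Nontrivial (locCoh k J i) }

/-- A set `U` of vertices is dominating: every vertex outside `U` is adjacent to a
vertex of `U`. -/
def Dominating {σ : Type} (Γ : SimpleGraph σ) (U : Set σ) : Prop :=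
  ∀ v ∉ U, ∃ u ∈ U, Γ.Adj u v

/-- The closed neighborhood `N[v]` of a vertex. -/
def closedNbhd {σ : Type} (Γ : SimpleGraph σ) (v : σ) : Set σ :=
  insert v { u | Γ.Adj v u }

/-- The closed neighborhood `N[C]` of a set of vertices. -/
def closedNbhdSet {σ : Type} (Γ : SimpleGraph σ) (C : Set σ) : Set σ :=
  ⋃ v ∈ C, closedNbhd Γ v

/-- An odd cycle of length `m` (given as an injective map `ZMod m → σ` with consecutive
vertices adjacent) in `Γ`. -/
def IsOddCycle {σ : Type} (Γ : SimpleGraph σ) (m : ℕ) (c : ZMod m → σ) : Prop :=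
  Odd m ∧ 3 ≤ m ∧ Function.Injective c ∧ ∀ i, Γ.Adj (c i) (c (i + 1))

/-- `F` is an independent set of `Γ`. -/
def IsIndep {σ : Type} [Fintype σ] [DecidableEq σ] (Γ : SimpleGraph σ) (F : Finset σ) : Prop :=
  ∀ i ∈ F, ∀ j ∈ F, ¬ Γ.Adj i j

/-- `F` is a maximal independent set of `Γ`. -/
def IsMaxIndep {σ : Type} [Fintype σ] [DecidableEq σ] (Γ : SimpleGraph σ) (F : Finset σ) : Prop :=
  IsIndep Γ F ∧ ∀ G : Finset σ, IsIndep Γ G → F ⊆ G → G = F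

/-- The prime ideal `P_F = (x_i : i ∉ F)`. -/
def PF (k : Type) [Field k] {σ : Type} [Fintype σ] [DecidableEq σ] (F : Finset σ) :
    Ideal (MvPolynomial σ k) :=
  Ideal.span { m | ∃ i ∉ F, m = X i }

/-- The `t`-th symbolic power `I^{(t)} = ⋂_{F maximal independent} P_F^t` of the edge ideal. -/
def symbPow (k : Type) [Field k] {σ : Type} [Fintype σ] [DecidableEq σ]
    (Γ : SimpleGraph σ) (t : ℕ) : Ideal (MvPolynomial σ k) :=
  ⨅ F ∈ { F : Finset σ | IsMaxIndep Γ F }, PF k F ^ t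

/-- The monomial `x^a`. -/
def xPow (k : Type) [Field k] {σ : Type} [Fintype σ] (a : σ → ℕ) : MvPolynomial σ k :=
  ∏ i, X i ^ a i

/-- The localization `R[x_i^{-1} : i ∈ F]`. -/
abbrev locAt (k : Type) [Field k] {σ : Type} (F : Finset σ) :=
  Localization (Submonoid.closure ((fun i => (X i : MvPolynomial σ k)) '' (F : Set σ)))

/-- The degree complex `Δ_a(J) = {F : x^a ∉ J·R[x_i^{-1} : i ∈ F]}` of a monomial ideal `J`. -/
def degComplex (k : Type) [Field k] {σ : Type} [Fintype σ] (J : Ideal (MvPolynomial σ k))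
    (a : σ → ℕ) : Set (Finset σ) :=
  { F | algebraMap (MvPolynomial σ k) (locAt k F) (xPow k a) ∉
      J.map (algebraMap (MvPolynomial σ k) (locAt k F)) }

/-- `F` is a facet (maximal face) of the complex `Δ`. -/
def IsFacet {σ : Type} (Δ : Set (Finset σ)) (F : Finset σ) : Prop :=
  F ∈ Δ ∧ ∀ G ∈ Δ, F ⊆ G → G = F

/-- The complex `Δ` is disconnected: its vertex set splits into two nonempty parts such that
no face meets both. -/
def ComplexDisconnected {σ : Type} (Δ : Set (Finset σ)) : Prop :=
  ∃ A B : Set σ, A.Nonempty ∧ B.Nonempty ∧ Disjoint A B ∧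
    (∀ i, {i} ∈ Δ ↔ i ∈ A ∪ B) ∧
    ∀ F ∈ Δ, ¬ ((∃ i ∈ F, i ∈ A) ∧ (∃ j ∈ F, j ∈ B))

/-- The polynomial ring `R_v = k[x_i : i ≠ v]`. -/
abbrev Rv (k : Type) [Field k] {σ : Type} (v : σ) := MvPolynomial { i : σ // i ≠ v } k

/-- The localization `R[x_v^{-1}]`. -/
abbrev LocAway (k : Type) [Field k] {σ : Type} (v : σ) :=
  Localization.Away (X v : MvPolynomial σ k)

/-- For an ideal `I` of `R`, the ideal `I_v = I·R[x_v^{-1}] ∩ R_v` of `R_v`. -/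
def idealV (k : Type) [Field k] {σ : Type} (I : Ideal (MvPolynomial σ k)) (v : σ) :
    Ideal (Rv k v) :=
  Ideal.comap ((algebraMap (MvPolynomial σ k) (LocAway k v)).comp
      (MvPolynomial.rename (Subtype.val : { i : σ // i ≠ v } → σ)).toRingHom)
    (I.map (algebraMap (MvPolynomial σ k) (LocAway k v)))

/-- The edge ideal of the induced subgraph `Γ_U` in `k[x_i : i ∈ U]`. -/
def edgeIdealOn (k : Type) [Field k] {σ : Type} (Γ : SimpleGraph σ) (U : Set σ) :
    Ideal (MvPolynomial U k) :=
  Ideal.span { m | ∃ i j : U, Γ.Adj (i : σ) (j : σ) ∧ m = X i * X j }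

/-- `Γ` has no isolated vertices. -/
def NoIsolated {σ : Type} (Γ : SimpleGraph σ) : Prop :=
  ∀ v : σ, ∃ u : σ, Γ.Adj v u

/-!
`H¹_m(M)` is the colimit of the modules `Ext¹(R/mˢ, M)`, that is, of the linear maps `mˢ → M` modulo
multiplications by elements of `M`. For `M = R/I^{(t)}` this can be read off exponent by exponent:
the exponent `d` sees the maximal independent sets `F` for which the degree of `d` in the variables
outside `F` is less than `t` (the facets of the degree complex of Takayama's formula), and `H¹`
measures whether these sets are connected through common vertices.

If `F` and `G` are disjoint sets of this kind and `Γ_{F ∪ G}` is disconnected, exchanging `F` and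
`G` on one component produces two independent sets which cover `F ∪ G`. By an averaging argument one
of them extends to a maximal independent set of the same kind, and it meets both `F` and `G`. So
`H¹` vanishes when no disjoint pair spans a connected subgraph. Conversely, given such a pair, the
product of the edges of a spanning tree of `Γ_{F ∪ G}`, multiplied by a power of one edge, has an
exponent which sees only `F` and `G`, and a Mayer–Vietoris argument gives `H¹ ≠ 0`. Since `H⁰`
vanishes, the depth is one exactly when `H¹` does not vanish.
-/

section Ext

open CategoryTheory Limits Opposite

universe u

variable {R : Type u} [CommRing R]

/-- The functor `Hom(-, M)` whose left derived functors, read in the opposite category, compute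
`Ext`. -/
abbrev homFunctor (M : ModuleCat.{u} R) : ModuleCat.{u} R ⥤ (ModuleCat.{u} R)ᵒᵖ :=
  ((linearYoneda R (ModuleCat.{u} R)).obj M).rightOp

/-- The complex `Hom(P, M)` of a projective resolution `P`, as a chain complex in the opposite
category: its opcycles are the cocycles of the usual cochain complex. -/
abbrev homComplex {X : ModuleCat.{u} R} (P : ProjectiveResolution X) (M : ModuleCat.{u} R) :
    ChainComplex (ModuleCat.{u} R)ᵒᵖ ℕ :=
  ((homFunctor M).mapHomologicalComplex (ComplexShape.down ℕ)).obj P.complex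

/-- The `n`-cocycles of `Hom(P, M)`. -/
def cocycles {X : ModuleCat.{u} R} (P : ProjectiveResolution X) (M : ModuleCat.{u} R) (n : ℕ) :
    Submodule R (P.complex.X n ⟶ M) :=
  LinearMap.ker (Linear.leftComp R M (P.complex.d (n + 1) n))

variable {X Y : ModuleCat.{u} R} (P : ProjectiveResolution X) (Q : ProjectiveResolution Y)
  (M : ModuleCat.{u} R) (n : ℕ)

theorem mem_cocycles_iff {z : P.complex.X n ⟶ M} :
    z ∈ cocycles P M n ↔ P.complex.d (n + 1) n ≫ z = 0 :=
  Iff.rfl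

theorem pOpcycles_unop_injective :
    Function.Injective ((homComplex P M).pOpcycles n).unop :=
  (ModuleCat.mono_iff_injective _).1 inferInstance

theorem range_pOpcycles_unop :
    LinearMap.range ((homComplex P M).pOpcycles n).unop.hom = cocycles P M n := by
  have exact_p := ShortComplex.exact_of_g_is_cokernel
    (.mk _ _ ((homComplex P M).d_pOpcycles (n + 1) n))
    ((homComplex P M).opcyclesIsCokernel (n + 1) n (by simp))
  exact exact_p.unop.moduleCat_range_eq_ker

/-- Cocycles, read as elements of the opcycles of `homComplex P M`. -/
def cocyclesEquiv : ((homComplex P M).opcycles n).unop ≃ₗ[R] cocycles P M n :=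
  (LinearEquiv.ofInjective _ (pOpcycles_unop_injective P M n)).trans
    (LinearEquiv.ofEq _ _ (range_pOpcycles_unop P M n))

/-- `Ext` is the homology of `homComplex P M`. -/
def homologyIsoExt :
    ((homComplex P M).homology n).unop ≅ ((Ext R (ModuleCat.{u} R) n).obj (op X)).obj M :=
  (P.isoLeftDerivedObj (homFunctor M) n).unop

/-- The class in `Ext` of a cocycle. -/
def extClass : cocycles P M n →ₗ[R] ((Ext R (ModuleCat.{u} R) n).obj (op X)).obj M :=
  (((homComplex P M).homologyι n).unop ≫ (homologyIsoExt P M n).hom).hom ∘ₗ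
    (cocyclesEquiv P M n).symm.toLinearMap

theorem extClass_surjective : Function.Surjective (extClass P M n) :=
  ((ModuleCat.epi_iff_surjective (((homComplex P M).homologyι n).unop ≫
    (homologyIsoExt P M n).hom)).1 inferInstance).comp (cocyclesEquiv P M n).symm.surjective

theorem extClass_cocyclesEquiv (c : ((homComplex P M).opcycles n).unop) :
    extClass P M n (cocyclesEquiv P M n c) =
      (homologyIsoExt P M n).hom (((homComplex P M).homologyι n).unop c) := by
  simp only [extClass, LinearMap.comp_apply, LinearEquiv.coe_coe, LinearEquiv.symm_apply_apply]
  rfl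

theorem extClass_eq_zero_iff (z : cocycles P M (n + 1)) :
    extClass P M (n + 1) z = 0 ↔ ∃ w : P.complex.X n ⟶ M, P.complex.d (n + 1) n ≫ w = z := by
  obtain ⟨c, rfl⟩ := (cocyclesEquiv P M (n + 1)).surjective z
  have exact_ι := ShortComplex.exact_of_f_is_kernel
    (.mk _ _ ((homComplex P M).homologyι_comp_fromOpcycles (n + 1) n))
    ((homComplex P M).homologyIsKernel (n + 1) n (by simp))
  have iso_injective : Function.Injective (homologyIsoExt P M (n + 1)).hom :=
    (ModuleCat.mono_iff_injective _).1 inferInstance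
  have p_fromOpcycles := congrArg Quiver.Hom.unop ((homComplex P M).p_fromOpcycles (n + 1) n)
  calc extClass P M (n + 1) (cocyclesEquiv P M (n + 1) c) = 0
      ↔ ((homComplex P M).homologyι (n + 1)).unop c = 0 := by
        rw [extClass_cocyclesEquiv, map_eq_zero_iff _ iso_injective]
    _ ↔ ∃ w, ((homComplex P M).fromOpcycles (n + 1) n).unop w = c :=
        LinearMap.mem_ker.symm.trans (SetLike.ext_iff.1 exact_ι.unop.moduleCat_range_eq_ker c).symm
    _ ↔ ∃ w, ((homComplex P M).d (n + 1) n).unop w =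
          ((homComplex P M).pOpcycles (n + 1)).unop c := by
        refine exists_congr fun w => ?_
        rw [← p_fromOpcycles]
        exact (pOpcycles_unop_injective P M (n + 1)).eq_iff.symm

theorem extClass_eq_iff (z z' : cocycles P M (n + 1)) :
    extClass P M (n + 1) z = extClass P M (n + 1) z' ↔
      ∃ w : P.complex.X n ⟶ M, P.complex.d (n + 1) n ≫ w = z - z' := by
  rw [← sub_eq_zero, ← map_sub, extClass_eq_zero_iff, Submodule.coe_sub]

variable {P Q}

theorem comp_mem_cocycles (φ : P.complex ⟶ Q.complex) {z : Q.complex.X n ⟶ M}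
    (hz : z ∈ cocycles Q M n) : φ.f n ≫ z ∈ cocycles P M n := by
  rw [mem_cocycles_iff] at hz ⊢
  rw [← Category.assoc, ← φ.comm, Category.assoc, hz, comp_zero]

theorem map_extClass (f : X ⟶ Y) (φ : P.complex ⟶ Q.complex)
    (hφ : φ.f 0 ≫ Q.π.f 0 = P.π.f 0 ≫ f) (z : cocycles Q M n) :
    ((Ext R (ModuleCat.{u} R) n).map f.op).app M (extClass Q M n z) =
      extClass P M n ⟨φ.f n ≫ z, comp_mem_cocycles M n φ z.2⟩ := by
  obtain ⟨c, rfl⟩ := (cocyclesEquiv Q M n).surjective z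
  let ψ := ((homFunctor M).mapHomologicalComplex (ComplexShape.down ℕ)).map φ
  have map_cocycle : (⟨φ.f n ≫ (cocyclesEquiv Q M n c : Q.complex.X n ⟶ M),
      comp_mem_cocycles M n φ (cocyclesEquiv Q M n c).2⟩ : cocycles P M n) =
        cocyclesEquiv P M n ((HomologicalComplex.opcyclesMap ψ n).unop c) :=
    Subtype.ext <| .symm <| congrArg (fun f => f.unop.hom c) (HomologicalComplex.p_opcyclesMap ψ n)
  have homology_natural : (HomologicalComplex.homologyMap ψ n).unop
      (((homComplex Q M).homologyι n).unop c) =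
        ((homComplex P M).homologyι n).unop ((HomologicalComplex.opcyclesMap ψ n).unop c) :=
    congrArg (fun f => f.unop.hom c) (HomologicalComplex.homologyι_naturality ψ n)
  have ext_natural (h : ((homComplex Q M).homology n).unop) :
      ((Ext R (ModuleCat.{u} R) n).map f.op).app M ((homologyIsoExt Q M n).hom h) =
        (homologyIsoExt P M n).hom ((HomologicalComplex.homologyMap ψ n).unop h) :=
    congrArg (fun f => f.unop.hom h)
      (ProjectiveResolution.isoLeftDerivedObj_hom_naturality f P Q φ hφ (homFunctor M) n)
  rw [map_cocycle, extClass_cocyclesEquiv, extClass_cocyclesEquiv, ext_natural, homology_natural]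

end Ext

section ExtOne

open CategoryTheory Limits Opposite

universe u

variable {R : Type u} [CommRing R]

/-- A chosen projective resolution of `R ⧸ J`. -/
abbrev quotientResolution (J : Ideal R) : ProjectiveResolution (ModuleCat.of R (R ⧸ J)) :=
  projectiveResolution (ModuleCat.of R (R ⧸ J))

variable (J : Ideal R)

/-- The augmentation `P₀ → R ⧸ J` of the chosen resolution, as a linear map. -/
def augmentation : (quotientResolution J).complex.X 0 →ₗ[R] R ⧸ J :=
  ((quotientResolution J).π.f 0).hom

theorem exists_augmentationLift : ∃ ℓ : (quotientResolution J).complex.X 0 →ₗ[R] R,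
    J.mkQ ∘ₗ ℓ = augmentation J :=
  haveI := (IsProjective.iff_projective _).2 ((quotientResolution J).projective 0)
  Module.projective_lifting_property J.mkQ (augmentation J) J.mkQ_surjective

/-- A lift `P₀ → R` of the augmentation along `R → R ⧸ J`. -/
def augmentationLift : (quotientResolution J).complex.X 0 →ₗ[R] R :=
  (exists_augmentationLift J).choose

theorem mk_augmentationLift (p : (quotientResolution J).complex.X 0) :
    Ideal.Quotient.mk J (augmentationLift J p) = augmentation J p :=
  LinearMap.congr_fun (exists_augmentationLift J).choose_spec p

theorem exists_augmentation_eq_one : ∃ p, augmentation J p = 1 :=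
  (ModuleCat.epi_iff_surjective ((quotientResolution J).π.f 0)).1 inferInstance (1 : R ⧸ J)

theorem augmentation_d (y : (quotientResolution J).complex.X 1) :
    augmentation J ((quotientResolution J).complex.d 1 0 y) = 0 :=
  congrArg (fun f => f.hom y) (quotientResolution J).complex_d_comp_π_f_zero

variable {J} in
theorem exists_d_eq_of_augmentation_eq_zero {p : (quotientResolution J).complex.X 0}
    (hp : augmentation J p = 0) : ∃ y, (quotientResolution J).complex.d 1 0 y = p :=
  (ShortComplex.moduleCat_exact_iff _).1 (quotientResolution J).exact₀ p hp

theorem exists_d_eq_smul {p : (quotientResolution J).complex.X 0} (hp : augmentation J p = 1)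
    (r : J) : ∃ y, (quotientResolution J).complex.d 1 0 y = (r : R) • p := by
  apply exists_d_eq_of_augmentation_eq_zero
  rw [map_smul, hp, Algebra.smul_def, mul_one]
  exact Ideal.Quotient.eq_zero_iff_mem.2 r.2

/-- The boundary map `P₁ → P₀`, lifted to a map `P₁ → J` through `augmentationLift`. -/
def boundaryLift : (quotientResolution J).complex.X 1 →ₗ[R] J :=
  (augmentationLift J ∘ₗ ((quotientResolution J).complex.d 1 0).hom).codRestrict J fun y =>
    Ideal.Quotient.eq_zero_iff_mem.1 ((mk_augmentationLift J _).trans (augmentation_d J y))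

theorem coe_boundaryLift (y : (quotientResolution J).complex.X 1) :
    (boundaryLift J y : R) = augmentationLift J ((quotientResolution J).complex.d 1 0 y) :=
  rfl

variable (M : ModuleCat.{u} R)

theorem ofHom_comp_boundaryLift_mem_cocycles (φ : J →ₗ[R] M) :
    ModuleCat.ofHom (φ ∘ₗ boundaryLift J) ∈ cocycles (quotientResolution J) M 1 := by
  have d_comp_d (y) : (quotientResolution J).complex.d 1 0
      ((quotientResolution J).complex.d 2 1 y) = 0 :=
    congrArg (fun f => f.hom y) ((quotientResolution J).complex.d_comp_d 2 1 0)
  rw [mem_cocycles_iff]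
  ext y
  have boundaryLift_d : boundaryLift J ((quotientResolution J).complex.d 2 1 y) = 0 :=
    Subtype.ext (by rw [coe_boundaryLift, d_comp_d, map_zero, Submodule.coe_zero])
  exact (congrArg φ boundaryLift_d).trans (map_zero φ)

/-- The connecting homomorphism `Hom(J, M) → Ext¹(R ⧸ J, M)` of `0 → J → R → R ⧸ J → 0`. -/
def connecting : (J →ₗ[R] M) →ₗ[R]
    ((Ext R (ModuleCat.{u} R) 1).obj (op (ModuleCat.of R (R ⧸ J)))).obj M :=
  extClass (quotientResolution J) M 1 ∘ₗ
    { toFun := fun φ => ⟨_, ofHom_comp_boundaryLift_mem_cocycles J M φ⟩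
      map_add' := fun _ _ => rfl
      map_smul' := fun _ _ => rfl }

theorem boundaryLift_of_d_eq_smul {p : (quotientResolution J).complex.X 0} {r : J}
    {y : (quotientResolution J).complex.X 1}
    (hy : (quotientResolution J).complex.d 1 0 y = (r : R) • p) :
    boundaryLift J y = augmentationLift J p • r :=
  Subtype.ext <| by
    rw [coe_boundaryLift, hy, map_smul, Submodule.coe_smul, smul_eq_mul, smul_eq_mul, mul_comm]

theorem exists_eq_smul_of_comp_boundaryLift_eq {φ : J →ₗ[R] M}
    {w : (quotientResolution J).complex.X 0 →ₗ[R] M}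
    (hw : ∀ y, w ((quotientResolution J).complex.d 1 0 y) = φ (boundaryLift J y)) :
    ∃ u : M, ∀ r : J, φ r = (r : R) • u := by
  obtain ⟨p, hp⟩ := exists_augmentation_eq_one J
  set c := augmentationLift J p with hc
  have hc_sub : c - 1 ∈ J := by
    rw [← Ideal.Quotient.eq_zero_iff_mem, map_sub, hc, mk_augmentationLift, hp, map_one, sub_self]
  refine ⟨w p - φ ⟨c - 1, hc_sub⟩, fun r => ?_⟩
  obtain ⟨y, hy⟩ := exists_d_eq_smul J hp r
  have smul_w : (r : R) • w p = c • φ r := by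
    rw [← map_smul, ← hy, hw, boundaryLift_of_d_eq_smul J hy, map_smul]
  have smul_φ : (r : R) • φ ⟨c - 1, hc_sub⟩ = (c - 1) • φ r := by
    rw [← map_smul, ← map_smul]
    exact congrArg φ (Subtype.ext (mul_comm _ _))
  rw [smul_sub, smul_w, smul_φ, ← sub_smul, sub_sub_cancel, one_smul]

theorem connecting_eq_zero_iff (φ : J →ₗ[R] M) :
    connecting J M φ = 0 ↔ ∃ u : M, ∀ r : J, φ r = (r : R) • u := by
  refine (extClass_eq_zero_iff _ M 0 _).trans ⟨?_, ?_⟩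
  · rintro ⟨w, hw⟩
    exact exists_eq_smul_of_comp_boundaryLift_eq J M (w := w.hom)
      fun y => congrArg (fun f => f.hom y) hw
  · rintro ⟨u, hu⟩
    refine ⟨ModuleCat.ofHom (LinearMap.toSpanSingleton R M u ∘ₗ augmentationLift J), ?_⟩
    ext y
    exact (hu (boundaryLift J y)).symm

variable {M} in
theorem cocycle_apply_eq_zero {z : (quotientResolution J).complex.X 1 ⟶ M}
    (hz : z ∈ cocycles (quotientResolution J) M 1) {y : (quotientResolution J).complex.X 1}
    (hy : (quotientResolution J).complex.d 1 0 y = 0) : z y = 0 := by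
  obtain ⟨v, rfl⟩ :=
    (ShortComplex.moduleCat_exact_iff _).1 ((quotientResolution J).exact_succ 0) y hy
  exact congrArg (fun f => f.hom v) hz

variable {M} in
theorem exists_hom_of_cocycle {z : (quotientResolution J).complex.X 1 ⟶ M}
    (hz : z ∈ cocycles (quotientResolution J) M 1) {p : (quotientResolution J).complex.X 0}
    (hp : augmentation J p = 1) : ∃ φ : J →ₗ[R] M, ∀ (r : J) y,
      (quotientResolution J).complex.d 1 0 y = (r : R) • p → φ r = z y := by
  set d := ((quotientResolution J).complex.d 1 0).hom
  have ker_le : LinearMap.ker d ≤ LinearMap.ker z.hom := fun y hy =>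
    cocycle_apply_eq_zero J hz hy
  let smulBase : J →ₗ[R] LinearMap.range d :=
    (LinearMap.toSpanSingleton R _ p ∘ₗ J.subtype).codRestrict _ (exists_d_eq_smul J hp)
  refine ⟨(LinearMap.ker d).liftQ z.hom ker_le ∘ₗ d.quotKerEquivRange.symm.toLinearMap ∘ₗ smulBase,
    fun r y hy => ?_⟩
  have : d.quotKerEquivRange.symm (smulBase r) = (LinearMap.ker d).mkQ y := by
    rw [LinearEquiv.symm_apply_eq]
    exact Subtype.ext hy.symm
  simp only [LinearMap.comp_apply, LinearEquiv.coe_coe, this]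
  rfl

theorem exists_contraction {p : (quotientResolution J).complex.X 0} (hp : augmentation J p = 1) :
    ∃ h : (quotientResolution J).complex.X 0 →ₗ[R] (quotientResolution J).complex.X 1, ∀ q,
      (quotientResolution J).complex.d 1 0 (h q) = q - augmentationLift J q • p := by
  let f : (quotientResolution J).complex.X 0 ⟶ (quotientResolution J).complex.X 0 :=
    ModuleCat.ofHom (LinearMap.id - LinearMap.toSpanSingleton R _ p ∘ₗ augmentationLift J)
  have aug_f : f ≫ (quotientResolution J).π.f 0 = 0 := by
    ext q
    change augmentation J (q - augmentationLift J q • p) = 0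
    rw [map_sub, map_smul, hp, Algebra.smul_def, mul_one, sub_eq_zero]
    exact (mk_augmentationLift J q).symm
  exact ⟨((quotientResolution J).exact₀.liftFromProjective _ aug_f).hom, fun q => congrArg
    (fun f => f.hom q) ((quotientResolution J).exact₀.liftFromProjective_comp _ aug_f)⟩

theorem connecting_surjective : Function.Surjective (connecting J M) := by
  intro e
  obtain ⟨z, rfl⟩ := extClass_surjective (quotientResolution J) M 1 e
  obtain ⟨p, hp⟩ := exists_augmentation_eq_one J
  obtain ⟨φ, hφ⟩ := exists_hom_of_cocycle J z.2 hp
  obtain ⟨h, hh⟩ := exists_contraction J hp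
  refine ⟨φ, .symm <| (extClass_eq_iff _ M 0 _ _).2 ⟨ModuleCat.ofHom h ≫ z, ?_⟩⟩
  ext y
  have φ_boundaryLift : φ (boundaryLift J y) =
      z.1 (y - h ((quotientResolution J).complex.d 1 0 y)) :=
    hφ _ _ (by rw [map_sub, hh, sub_sub_cancel, coe_boundaryLift])
  change z.1 (h ((quotientResolution J).complex.d 1 0 y)) = z.1 y - φ (boundaryLift J y)
  rw [φ_boundaryLift, map_sub, sub_sub_cancel]

variable {J} {J' : Ideal R} (hJ : J' ≤ J)

/-- The projection `R ⧸ J' → R ⧸ J` for `J' ≤ J`. -/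
def quotientMap : ModuleCat.of R (R ⧸ J') ⟶ ModuleCat.of R (R ⧸ J) :=
  ModuleCat.ofHom (Submodule.mapQ J' J LinearMap.id hJ)

theorem map_connecting (φ : J →ₗ[R] M) :
    ((Ext R (ModuleCat.{u} R) 1).map (quotientMap hJ).op).app M (connecting J M φ) =
      connecting J' M (φ ∘ₗ Submodule.inclusion hJ) := by
  let P := quotientResolution J
  let P' := quotientResolution J'
  let g : P'.complex ⟶ P.complex := ProjectiveResolution.lift (quotientMap hJ) P' P
  have comm : g.f 0 ≫ P.π.f 0 = P'.π.f 0 ≫ quotientMap hJ :=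
    ProjectiveResolution.lift_commutes_zero (quotientMap hJ) P' P
  have sub_mem (q) :
      (augmentationLift J ∘ₗ (g.f 0).hom - augmentationLift J') q ∈ J := by
    rw [LinearMap.sub_apply, ← Ideal.Quotient.eq_zero_iff_mem, map_sub, sub_eq_zero]
    refine (mk_augmentationLift J _).trans ((congrArg (fun f => f.hom q) comm).trans ?_)
    exact congrArg (quotientMap hJ) (mk_augmentationLift J' q).symm
  refine (map_extClass M 1 _ g comm _).trans ((extClass_eq_iff _ M 0 _ _).2
    ⟨ModuleCat.ofHom (φ ∘ₗ LinearMap.codRestrict J _ sub_mem), ?_⟩)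
  ext y
  change φ _ = φ (boundaryLift J (g.f 1 y)) - φ (Submodule.inclusion hJ (boundaryLift J' y))
  rw [← map_sub]
  refine congrArg φ (Subtype.ext (congrArg (· - _) (congrArg (augmentationLift J) ?_)))
  exact (congrArg (fun f => f.hom y) (g.comm 1 0)).symm

end ExtOne

section LocalCohomology

open CategoryTheory Limits Opposite

universe u

variable {R : Type u} [CommRing R] (I : Ideal R) (i : ℕ) (M : ModuleCat.{u} R)

/-- The canonical map `Extⁱ(R ⧸ I ^ s, M) → Hⁱ_I(M)` into the colimit. -/
def toLocalCohomology (s : ℕ) :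
    ((Ext R (ModuleCat.{u} R) i).obj (op (ModuleCat.of R (R ⧸ I ^ s)))).obj M ⟶
      (localCohomology I i).obj M :=
  (colimit.ι (localCohomology.diagram (localCohomology.idealPowersDiagram I) i) (op (op s))).app M

/-- Evaluating at `M` the colimit of functors that defines local cohomology gives a colimit of
modules. -/
def isColimitEvaluation :
    IsColimit (((evaluation _ _).obj M).mapCocone
      (colimit.cocone (localCohomology.diagram (localCohomology.idealPowersDiagram I) i))) :=
  isColimitOfPreserves _ (colimit.isColimit _)

theorem exists_toLocalCohomology_eq (x : (localCohomology I i).obj M) :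
    ∃ s e, toLocalCohomology I i M s e = x :=
  have := preservesSmallestFilteredColimits_of_preservesFilteredColimits
    (forget (ModuleCat.{u} R))
  let ⟨j, e, he⟩ := Concrete.isColimit_exists_rep _ (isColimitEvaluation I i M) x
  ⟨j.unop.unop, e, he⟩

theorem toLocalCohomology_eq_zero_iff (s : ℕ)
    (e : ((Ext R (ModuleCat.{u} R) i).obj (op (ModuleCat.of R (R ⧸ I ^ s)))).obj M) :
    toLocalCohomology I i M s e = 0 ↔ ∃ (s' : ℕ) (h : s ≤ s'), ((Ext R (ModuleCat.{u} R) i).map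
      (quotientMap (Ideal.pow_le_pow_right h)).op).app M e = 0 := by
  have := preservesSmallestFilteredColimits_of_preservesFilteredColimits
    (forget (ModuleCat.{u} R))
  have rep_eq_iff := Concrete.isColimit_rep_eq_iff_exists _ (isColimitEvaluation I i M)
    (i := op (op s)) (j := op (op s)) e 0
  simp only [map_zero] at rep_eq_iff
  refine rep_eq_iff.trans ⟨?_, ?_⟩
  · rintro ⟨j, f, -, h⟩
    exact ⟨j.unop.unop, f.unop.unop.down.down, h⟩
  · rintro ⟨s', hs, h⟩
    exact ⟨op (op s'), (homOfLE hs).op.op, (homOfLE hs).op.op, h⟩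

theorem subsingleton_localCohomology_zero
    (htf : ∀ s, ∀ x : M, (∀ r ∈ I ^ s, r • x = 0) → x = 0) :
    Subsingleton ((localCohomology I 0).obj M) := by
  refine subsingleton_of_forall_eq 0 fun x => ?_
  obtain ⟨s, e, rfl⟩ := exists_toLocalCohomology_eq I 0 M x
  obtain ⟨⟨z, hz⟩, rfl⟩ := extClass_surjective (quotientResolution (I ^ s)) M 0 e
  have z_eq_zero : z = 0 := by
    ext p
    refine htf s _ fun r hr => ?_
    have aug_smul : augmentation (I ^ s) (r • p) = 0 := by
      rw [map_smul, Algebra.smul_def, Ideal.Quotient.algebraMap_eq,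
        Ideal.Quotient.eq_zero_iff_mem.2 hr, zero_mul]
    obtain ⟨y, hy⟩ := exists_d_eq_of_augmentation_eq_zero aug_smul
    calc r • z p = z ((quotientResolution (I ^ s)).complex.d 1 0 y) := by rw [hy, map_smul]
      _ = 0 := congrArg (fun f => f.hom y) hz
  subst z_eq_zero
  exact (congrArg _ (map_zero (extClass (quotientResolution (I ^ s)) M 0))).trans (map_zero _)

variable {I M} in
/-- `φ : I ^ s → M` becomes multiplication by an element of `M` on some smaller power of `I`, i.e.
its class in `colim Hom(I ^ s, M) / M = H¹_I(M)` vanishes. -/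
def EventuallyPrincipal {s : ℕ} (φ : ↥(I ^ s) →ₗ[R] M) : Prop :=
  ∃ (s' : ℕ) (h : s ≤ s') (u : M), ∀ r : ↥(I ^ s'),
    φ (Submodule.inclusion (Ideal.pow_le_pow_right h) r) = (r : R) • u

theorem toLocalCohomology_connecting_eq_zero_iff {s : ℕ} (φ : ↥(I ^ s) →ₗ[R] M) :
    toLocalCohomology I 1 M s (connecting (I ^ s) M φ) = 0 ↔ EventuallyPrincipal φ := by
  simp only [toLocalCohomology_eq_zero_iff, map_connecting, connecting_eq_zero_iff]
  rfl

theorem subsingleton_localCohomology_one_iff :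
    Subsingleton ((localCohomology I 1).obj M) ↔
      ∀ (s : ℕ) (φ : ↥(I ^ s) →ₗ[R] M), EventuallyPrincipal φ := by
  refine ⟨fun _ s φ => ?_, fun h => subsingleton_of_forall_eq 0 fun x => ?_⟩
  · exact (toLocalCohomology_connecting_eq_zero_iff I M φ).1 (Subsingleton.elim _ _)
  · obtain ⟨s, e, rfl⟩ := exists_toLocalCohomology_eq I 1 M x
    obtain ⟨φ, rfl⟩ := connecting_surjective (I ^ s) M e
    exact (toLocalCohomology_connecting_eq_zero_iff I M φ).2 (h s φ)

end LocalCohomology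

section MayerVietoris

universe u

variable {R : Type u} [CommRing R]

/-- `J` is saturated with respect to `I`: the ring `R ⧸ J` has no nonzero `I`-power torsion. -/
def IsSaturated (I J : Ideal R) : Prop :=
  ∀ (s : ℕ) (f : R), (∀ r ∈ I ^ s, r * f ∈ J) → f ∈ J

variable {I J₁ J₂ : Ideal R}

theorem IsSaturated.subsingleton_localCohomology_zero {J : Ideal R} (hJ : IsSaturated I J) :
    Subsingleton ((localCohomology I 0).obj (ModuleCat.of R (R ⧸ J))) := by
  refine _root_.subsingleton_localCohomology_zero I _ fun s x hx => ?_
  obtain ⟨f, rfl⟩ := J.mkQ_surjective x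
  exact Ideal.Quotient.eq_zero_iff_mem.2 <| hJ s f fun r hr =>
    Ideal.Quotient.eq_zero_iff_mem.1 (hx r hr)

theorem exists_splitting_map (J₁ J₂ : Ideal R) :
    ∃ ψ : ↥(J₁ ⊔ J₂) →ₗ[R] R ⧸ (J₁ ⊓ J₂), ∀ a ∈ J₁, ∀ b ∈ J₂, ∀ h : a + b ∈ J₁ ⊔ J₂,
      ψ ⟨a + b, h⟩ = Ideal.Quotient.mk (J₁ ⊓ J₂) a := by
  let onLeft : R →ₗ.[R] R ⧸ (J₁ ⊓ J₂) := ⟨J₁, (J₁ ⊓ J₂).mkQ ∘ₗ J₁.subtype⟩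
  let onRight : R →ₗ.[R] R ⧸ (J₁ ⊓ J₂) := ⟨J₂, 0⟩
  have agree (a : onLeft.domain) (b : onRight.domain) (hab : (a : R) = b) :
      onLeft a = onRight b := by
    have a_mem : (a : R) ∈ J₂ := hab ▸ b.2
    exact Ideal.Quotient.eq_zero_iff_mem.2 ⟨a.2, a_mem⟩
  refine ⟨(onLeft.sup onRight agree).toFun, fun a ha b hb h => ?_⟩
  exact (LinearPMap.sup_apply agree ⟨a, ha⟩ ⟨b, hb⟩ ⟨a + b, h⟩ rfl).trans (add_zero _)

/-- A class of `H⁰_I(R ⧸ (J₁ ⊔ J₂))` survives the connecting map of the Mayer–Vietoris sequence,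
because `H⁰_I(R ⧸ J₁)` and `H⁰_I(R ⧸ J₂)` vanish. -/
theorem nontrivial_localCohomology_one_of_mul_mem_sup (h₁ : IsSaturated I J₁)
    (h₂ : IsSaturated I J₂) {x : R} (hx : x ∉ J₁ ⊔ J₂) {s : ℕ}
    (hs : ∀ r ∈ I ^ s, r * x ∈ J₁ ⊔ J₂) :
    Nontrivial ((localCohomology I 1).obj (ModuleCat.of R (R ⧸ (J₁ ⊓ J₂)))) := by
  rw [← not_subsingleton_iff_nontrivial, subsingleton_localCohomology_one_iff]
  intro eventually_principal
  obtain ⟨ψ, hψ⟩ := exists_splitting_map J₁ J₂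
  let φ : ↥(I ^ s) →ₗ[R] R ⧸ (J₁ ⊓ J₂) :=
    ψ ∘ₗ (LinearMap.mulRight R x ∘ₗ (I ^ s).subtype).codRestrict _ fun r => hs r r.2
  obtain ⟨s', hs', u, hu⟩ := eventually_principal s φ
  obtain ⟨u, rfl⟩ := (J₁ ⊓ J₂).mkQ_surjective u
  have split (r) (hr : r ∈ I ^ s') : r * u ∈ J₁ ∧ r * (x - u) ∈ J₂ := by
    obtain ⟨a, ha, b, hb, hab⟩ := Submodule.mem_sup.1 (hs r (Ideal.pow_le_pow_right hs' hr))
    have φ_eq : φ (Submodule.inclusion (Ideal.pow_le_pow_right hs') ⟨r, hr⟩) =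
        Ideal.Quotient.mk _ a :=
      (congrArg ψ (Subtype.ext hab.symm)).trans (hψ a ha b hb (Submodule.add_mem_sup ha hb))
    have sub_mem : a - r * u ∈ J₁ ⊓ J₂ := Ideal.Quotient.eq.1 (φ_eq.symm.trans (hu ⟨r, hr⟩))
    refine ⟨(Submodule.sub_mem_iff_right _ ha).1 sub_mem.1, ?_⟩
    rw [mul_sub, ← hab, add_sub_right_comm]
    exact J₂.add_mem sub_mem.2 hb
  have hu₁ : u ∈ J₁ := h₁ s' u fun r hr => (split r hr).1
  have hu₂ : x - u ∈ J₂ := h₂ s' (x - u) fun r hr => (split r hr).2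
  exact hx (by simpa using Submodule.add_mem_sup hu₁ hu₂)

end MayerVietoris

section Generators

universe u

variable {R : Type u} [CommRing R] {ι : Type*} (x : ι → R)

theorem exists_pow_span_range_le [Finite ι] (N : ℕ) :
    ∃ s, Ideal.span (Set.range x) ^ s ≤ Ideal.span (Set.range fun i => x i ^ N) := by
  refine Ideal.exists_pow_le_of_le_radical_of_fg ?_ (Submodule.fg_span (Set.finite_range x))
  rw [Ideal.span_le]
  rintro _ ⟨i, rfl⟩
  exact ⟨N, Ideal.subset_span ⟨i, rfl⟩⟩

theorem pow_mem_span_range_pow (i : ι) (s : ℕ) : x i ^ s ∈ Ideal.span (Set.range x) ^ s :=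
  Ideal.pow_mem_pow (Ideal.subset_span (Set.mem_range_self i)) s

theorem eventuallyPrincipal_of_forall_pow_smul [Finite ι] {M : ModuleCat.{u} R} {s : ℕ}
    {φ : ↥(Ideal.span (Set.range x) ^ s) →ₗ[R] M} {u : M} {N : ℕ}
    (hu : ∀ i, x i ^ N • (φ ⟨x i ^ s, pow_mem_span_range_pow x i s⟩ - x i ^ s • u) = 0) :
    EventuallyPrincipal φ := by
  let ψ := φ - LinearMap.toSpanSingleton R M u ∘ₗ Submodule.subtype _
  obtain ⟨s', hs'⟩ := exists_pow_span_range_le x (N + s)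
  have pow_le : Ideal.span (Set.range x) ^ s' ≤ (LinearMap.ker ψ).map (Submodule.subtype _) := by
    refine hs'.trans (Ideal.span_le.2 ?_)
    rintro _ ⟨i, rfl⟩
    refine ⟨x i ^ N • ⟨x i ^ s, pow_mem_span_range_pow x i s⟩, ?_, (pow_add _ _ _).symm⟩
    exact (map_smul ψ _ _).trans (hu i)
  refine ⟨s + s', Nat.le_add_right s s', u, fun r => ?_⟩
  obtain ⟨y, hy, hyr⟩ := pow_le (Ideal.pow_le_pow_right (Nat.le_add_left s' s) r.2)
  have y_eq : y = Submodule.inclusion (Ideal.pow_le_pow_right (Nat.le_add_right s s')) r :=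
    Subtype.ext hyr
  subst y_eq
  exact sub_eq_zero.1 (LinearMap.mem_ker.1 hy)

/-- The hypothesis says that the Čech complex of `M` on the elements `x i` is exact in degree
one. -/
theorem subsingleton_localCohomology_one_of_glue [Finite ι] (M : ModuleCat.{u} R)
    (glue : ∀ (s : ℕ) (m : ι → M), (∀ i j, x j ^ s • m i = x i ^ s • m j) →
      ∃ (u : M) (N : ℕ), ∀ i, x i ^ N • (m i - x i ^ s • u) = 0) :
    Subsingleton ((localCohomology (Ideal.span (Set.range x)) 1).obj M) := by
  refine (subsingleton_localCohomology_one_iff _ M).2 fun s φ => ?_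
  obtain ⟨u, N, hu⟩ := glue s (fun i => φ ⟨x i ^ s, pow_mem_span_range_pow x i s⟩) fun i j => by
    rw [← map_smul, ← map_smul]
    exact congrArg φ (Subtype.ext (mul_comm _ _))
  exact eventuallyPrincipal_of_forall_pow_smul x hu

end Generators

section Coefficients

variable {A σ : Type*} [CommSemiring A]

theorem coeff_single_add_X_pow_mul (i : σ) (s : ℕ) (d : σ →₀ ℕ) (f : MvPolynomial σ A) :
    coeff (Finsupp.single i s + d) (X i ^ s * f) = coeff d f := by
  rw [X_pow_eq_monomial, coeff_monomial_mul, one_mul]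

theorem coeff_X_pow_mul_eq_zero {i : σ} {s : ℕ} {d : σ →₀ ℕ} (hd : d i < s)
    (f : MvPolynomial σ A) : coeff d (X i ^ s * f) = 0 := by
  rw [X_pow_eq_monomial, coeff_monomial_mul', if_neg]
  rwa [Finsupp.single_le_iff, not_le]

theorem exists_coeff_eq_of_agree {ι : Type*} [Finite ι] (p : ι → MvPolynomial σ A)
    (P : ι → (σ →₀ ℕ) → Prop)
    (agree : ∀ d i j, P i d → P j d → coeff d (p i) = coeff d (p j)) :
    ∃ g, ∀ d i, P i d → coeff d g = coeff d (p i) := by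
  classical
  have := Fintype.ofFinite ι
  have exists_coeff (d) : ∃ c : A, ∀ i, P i d → c = coeff d (p i) := by
    by_cases h : ∃ j, P j d
    · obtain ⟨j, hj⟩ := h
      exact ⟨coeff d (p j), fun i hi => agree d j i hj hi⟩
    · exact ⟨0, fun i hi => absurd ⟨i, hi⟩ h⟩
  choose c hc using exists_coeff
  let D : Finset (σ →₀ ℕ) := Finset.univ.biUnion fun i => (p i).support
  refine ⟨∑ d ∈ D, monomial d (c d), fun d i hi => ?_⟩
  have coeff_g : coeff d (∑ e ∈ D, monomial e (c e)) = if d ∈ D then c d else 0 := by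
    simp only [coeff_sum, coeff_monomial, Finset.sum_ite_eq']
  rw [coeff_g]
  split_ifs with hd
  · exact hc d i hi
  · by_contra hne
    exact hd (Finset.mem_biUnion.2 ⟨i, Finset.mem_univ i, mem_support_iff.2 (Ne.symm hne)⟩)

end Coefficients

section DegreeOutside

variable {σ : Type} [Fintype σ] [DecidableEq σ]

/-- The degree of an exponent vector in the variables outside `F`; a monomial lies in `P_F ^ t`
exactly when this degree is at least `t`. -/
def degOff (F : Finset σ) : (σ →₀ ℕ) →+ ℕ :=
  ∑ i ∈ Fᶜ, Finsupp.applyAddHom i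

theorem degOff_apply (F : Finset σ) (d : σ →₀ ℕ) : degOff F d = ∑ i ∈ Fᶜ, d i := by
  simp [degOff]

theorem degOff_single (F : Finset σ) (i : σ) (s : ℕ) :
    degOff F (Finsupp.single i s) = if i ∈ F then 0 else s := by
  simp [degOff_apply, Finsupp.single_apply, ite_not]

theorem degOff_mono (F : Finset σ) : Monotone (degOff F) := fun d e h => by
  simpa only [degOff_apply] using Finset.sum_le_sum fun i _ => h i

theorem degOff_add_sum (F : Finset σ) (d : σ →₀ ℕ) : degOff F d + ∑ i ∈ F, d i = ∑ i, d i := by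
  rw [degOff_apply, Finset.sum_compl_add_sum]

end DegreeOutside

section FacetSymbPow

variable (k : Type) [Field k] {σ : Type} [Fintype σ] [DecidableEq σ]

theorem PF_pow_le_span_monomial (F : Finset σ) (t : ℕ) :
    PF k F ^ t ≤ Ideal.span ((fun d => monomial d (1 : k)) '' {d | t ≤ degOff F d}) := by
  induction t with
  | zero =>
    rw [pow_zero, Ideal.one_eq_top, top_le_iff, Ideal.eq_top_iff_one]
    exact Ideal.subset_span ⟨0, Nat.zero_le _, rfl⟩
  | succ t ih =>
    rw [pow_succ]
    refine (Ideal.mul_mono_left ih).trans ?_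
    rw [PF, Ideal.span_mul_span', Ideal.span_le]
    rintro _ ⟨_, ⟨d, hd, rfl⟩, _, ⟨i, hi, rfl⟩, rfl⟩
    refine Ideal.subset_span ⟨d + Finsupp.single i 1, ?_, ?_⟩
    · simpa [degOff_single, hi] using hd
    · simp [X, monomial_mul]

theorem monomial_mem_PF_pow {F : Finset σ} {t : ℕ} {d : σ →₀ ℕ} (ht : t ≤ degOff F d) :
    monomial d (1 : k) ∈ PF k F ^ t := by
  induction t generalizing d with
  | zero => simp
  | succ t ih =>
    obtain ⟨i, hi, hdi⟩ : ∃ i ∈ Fᶜ, d i ≠ 0 :=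
      Finset.exists_ne_zero_of_sum_ne_zero (by rw [← degOff_apply]; omega)
    have hiF : i ∉ F := Finset.mem_compl.1 hi
    obtain ⟨e, rfl⟩ : ∃ e, d = Finsupp.single i 1 + e :=
      exists_add_of_le (Finsupp.single_le_iff.2 (Nat.one_le_iff_ne_zero.2 hdi))
    have he : t ≤ degOff F e := by simpa [degOff_single, hiF, add_comm 1] using ht
    rw [pow_succ', ← one_mul (1 : k), ← monomial_mul]
    exact Ideal.mul_mem_mul (Ideal.subset_span ⟨i, hiF, rfl⟩) (ih he)

variable {k}

theorem mem_PF_pow_iff {F : Finset σ} {t : ℕ} {f : MvPolynomial σ k} :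
    f ∈ PF k F ^ t ↔ ∀ d, coeff d f ≠ 0 → t ≤ degOff F d := by
  constructor
  · intro hf d hd
    obtain ⟨e, he, hed⟩ := mem_ideal_span_monomial_image.1 (PF_pow_le_span_monomial k F t hf) d
      (mem_support_iff.2 hd)
    exact he.trans (degOff_mono F hed)
  · intro h
    rw [f.as_sum]
    refine Ideal.sum_mem _ fun d hd => ?_
    rw [← mul_one (coeff d f), ← C_mul_monomial]
    exact Ideal.mul_mem_left _ _ (monomial_mem_PF_pow k (h d (mem_support_iff.1 hd)))

variable (k) in
/-- The intersection of the powers `P_F ^ t` over a family `𝒮` of vertex sets. For the maximal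
independent sets of a graph this is the symbolic power `symbPow`. -/
def facetSymbPow (𝒮 : Set (Finset σ)) (t : ℕ) : Ideal (MvPolynomial σ k) :=
  ⨅ F ∈ 𝒮, PF k F ^ t

variable {𝒮 : Set (Finset σ)} {t : ℕ}

theorem mem_facetSymbPow_iff {f : MvPolynomial σ k} :
    f ∈ facetSymbPow k 𝒮 t ↔ ∀ d, coeff d f ≠ 0 → ∀ F ∈ 𝒮, t ≤ degOff F d := by
  simp only [facetSymbPow, Submodule.mem_iInf, mem_PF_pow_iff]
  exact ⟨fun h d hd F hF => h F hF d hd, fun h F hF d hd => h d hd F hF⟩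

theorem monomial_mem_facetSymbPow_iff {d : σ →₀ ℕ} :
    monomial d (1 : k) ∈ facetSymbPow k 𝒮 t ↔ ∀ F ∈ 𝒮, t ≤ degOff F d := by
  simp [mem_facetSymbPow_iff, coeff_monomial]

theorem isSaturated_facetSymbPow (h𝒮 : ∀ F ∈ 𝒮, F.Nonempty) :
    IsSaturated (maxIdeal k σ) (facetSymbPow k 𝒮 t) := by
  refine fun s f hf => mem_facetSymbPow_iff.2 fun d hd F hF => ?_
  obtain ⟨i, hi⟩ := h𝒮 F hF
  rw [← coeff_single_add_X_pow_mul i s d f] at hd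
  simpa [degOff_single, hi] using
    mem_facetSymbPow_iff.1 (hf _ (pow_mem_span_range_pow X i s)) _ hd F hF

theorem X_pow_mul_mem_facetSymbPow {i : σ} {f : MvPolynomial σ k}
    (hf : ∀ d, coeff d f ≠ 0 → ∀ F ∈ 𝒮, i ∈ F → t ≤ degOff F d) :
    X i ^ t * f ∈ facetSymbPow k 𝒮 t := by
  refine mem_facetSymbPow_iff.2 fun e he F hF => ?_
  have le_e : Finsupp.single i t ≤ e :=
    Finsupp.single_le_iff.2 <| not_lt.1 fun hlt => he (coeff_X_pow_mul_eq_zero hlt f)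
  obtain ⟨d, rfl⟩ := exists_add_of_le le_e
  rw [coeff_single_add_X_pow_mul] at he
  rw [map_add, degOff_single]
  split_ifs with hi
  · exact (hf d he F hF hi).trans (Nat.le_add_left _ _)
  · exact Nat.le_add_right _ _

end FacetSymbPow

section Vanishing

variable {k : Type} [Field k] {σ : Type} [Fintype σ] [DecidableEq σ]
variable {𝒮 : Set (Finset σ)} {s t : ℕ} {f : σ → MvPolynomial σ k}

/-- A strong form of connectedness of the degree complexes of `facetSymbPow k 𝒮 t`: the facets of
the complex at the exponent `d` are the `F ∈ 𝒮` with `degOff F d < t`, and any two nonempty ones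
are required to meet a common facet. -/
def HasLinkedFacets (𝒮 : Set (Finset σ)) (t : ℕ) : Prop :=
  ∀ d, ∀ F ∈ 𝒮, ∀ G ∈ 𝒮, F.Nonempty → G.Nonempty → degOff F d < t → degOff G d < t →
    ∃ H ∈ 𝒮, degOff H d < t ∧ ¬ Disjoint F H ∧ ¬ Disjoint H G

theorem coeff_divMonomial_eq_of_mem
    (compat : ∀ i j, X j ^ s * f i - X i ^ s * f j ∈ facetSymbPow k 𝒮 t)
    {F : Finset σ} (hF : F ∈ 𝒮) {d : σ →₀ ℕ} (hd : degOff F d < t) {i j : σ} (hi : i ∈ F)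
    (hj : j ∈ F) :
    coeff d ((f i).divMonomial (Finsupp.single i s)) =
      coeff d ((f j).divMonomial (Finsupp.single j s)) := by
  rw [coeff_divMonomial, coeff_divMonomial]
  by_contra hne
  have le_degOff := mem_facetSymbPow_iff.1 (compat i j)
    (Finsupp.single i s + (Finsupp.single j s + d)) (by
      rw [coeff_sub, coeff_single_add_X_pow_mul, add_left_comm, coeff_single_add_X_pow_mul]
      exact sub_ne_zero.2 hne) F hF
  simp only [map_add, degOff_single, hi, hj, if_true, zero_add] at le_degOff
  omega

theorem coeff_eq_zero_of_mem_of_lt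
    (compat : ∀ i j, X j ^ s * f i - X i ^ s * f j ∈ facetSymbPow k 𝒮 t)
    {F : Finset σ} (hF : F ∈ 𝒮) {d : σ →₀ ℕ} (hd : degOff F d < t) {i j : σ} (hj : j ∈ F)
    (hji : j ≠ i) (hds : d i < s) : coeff d (f i) = 0 := by
  by_contra hne
  have hlt : (Finsupp.single j s + d) i < s := by simpa [hji] using hds
  have le_degOff := mem_facetSymbPow_iff.1 (compat i j) (Finsupp.single j s + d) (by
    rwa [coeff_sub, coeff_single_add_X_pow_mul, coeff_X_pow_mul_eq_zero hlt, sub_zero]) F hF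
  simp only [map_add, degOff_single, hj, if_true, zero_add] at le_degOff
  omega

theorem exists_X_pow_mul_sub_mem_facetSymbPow (not_singleton : ∀ i, {i} ∉ 𝒮)
    (linked : HasLinkedFacets 𝒮 t)
    (compat : ∀ i j, X j ^ s * f i - X i ^ s * f j ∈ facetSymbPow k 𝒮 t) :
    ∃ g, ∀ i, X i ^ t * (f i - X i ^ s * g) ∈ facetSymbPow k 𝒮 t := by
  obtain ⟨g, hg⟩ := exists_coeff_eq_of_agree (fun i => (f i).divMonomial (Finsupp.single i s))
    (fun i d => ∃ F ∈ 𝒮, degOff F d < t ∧ i ∈ F) (by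
      rintro d i j ⟨F, hF, hFd, hi⟩ ⟨G, hG, hGd, hj⟩
      obtain ⟨H, hH, hHd, hFH, hHG⟩ := linked d F hF G hG ⟨i, hi⟩ ⟨j, hj⟩ hFd hGd
      obtain ⟨u, huF, huH⟩ := Finset.not_disjoint_iff.1 hFH
      obtain ⟨v, hvH, hvG⟩ := Finset.not_disjoint_iff.1 hHG
      exact (coeff_divMonomial_eq_of_mem compat hF hFd hi huF).trans <|
        (coeff_divMonomial_eq_of_mem compat hH hHd huH hvH).trans <|
        coeff_divMonomial_eq_of_mem compat hG hGd hvG hj)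
  refine ⟨g, fun i => X_pow_mul_mem_facetSymbPow fun d hd F hF hi => not_lt.1 fun hFd => hd ?_⟩
  rw [coeff_sub, sub_eq_zero]
  rcases lt_or_ge (d i) s with hds | hds
  · obtain ⟨j, hj, hji⟩ : ∃ j ∈ F, j ≠ i := by
      by_contra! h
      exact not_singleton i (Finset.eq_singleton_iff_unique_mem.2 ⟨hi, h⟩ ▸ hF)
    rw [coeff_X_pow_mul_eq_zero hds, coeff_eq_zero_of_mem_of_lt compat hF hFd hj hji hds]
  · obtain ⟨e, rfl⟩ := exists_add_of_le (Finsupp.single_le_iff.2 hds)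
    have hFe : degOff F e < t := by simpa [degOff_single, hi] using hFd
    rw [coeff_single_add_X_pow_mul, hg e i ⟨F, hF, hFe, hi⟩, coeff_divMonomial]

theorem subsingleton_locCoh_one_facetSymbPow (not_singleton : ∀ i, {i} ∉ 𝒮)
    (linked : HasLinkedFacets 𝒮 t) :
    Subsingleton (locCoh k (facetSymbPow k 𝒮 t) 1) := by
  refine subsingleton_localCohomology_one_of_glue X _ fun s m hm => ?_
  choose f hf using fun i => (facetSymbPow k 𝒮 t).mkQ_surjective (m i)
  obtain rfl : (fun i => (facetSymbPow k 𝒮 t).mkQ (f i)) = m := funext hf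
  obtain ⟨g, hg⟩ := exists_X_pow_mul_sub_mem_facetSymbPow (s := s) (f := f) not_singleton linked
    fun i j => Ideal.Quotient.eq.1 (hm i j)
  exact ⟨(facetSymbPow k 𝒮 t).mkQ g, t, fun i => Ideal.Quotient.eq_zero_iff_mem.2 (hg i)⟩

end Vanishing

section Nonvanishing

variable {k : Type} [Field k] {σ : Type} [Fintype σ] [DecidableEq σ]
variable {𝒮 𝒯 : Set (Finset σ)} {t : ℕ}

theorem facetSymbPow_union :
    facetSymbPow k (𝒮 ∪ 𝒯) t = facetSymbPow k 𝒮 t ⊓ facetSymbPow k 𝒯 t :=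
  iInf_union

theorem monomial_notMem_facetSymbPow_sup {a : σ →₀ ℕ} {F G : Finset σ} (hF : F ∈ 𝒮)
    (hFa : degOff F a < t) (hG : G ∈ 𝒯) (hGa : degOff G a < t) :
    monomial a (1 : k) ∉ facetSymbPow k 𝒮 t ⊔ facetSymbPow k 𝒯 t := by
  intro h
  obtain ⟨p, hp, q, hq, hpq⟩ := Submodule.mem_sup.1 h
  have hp0 : coeff a p = 0 := by
    by_contra hne
    exact hFa.not_ge (mem_facetSymbPow_iff.1 hp a hne F hF)
  have hq0 : coeff a q = 0 := by
    by_contra hne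
    exact hGa.not_ge (mem_facetSymbPow_iff.1 hq a hne G hG)
  have coeff_eq := congrArg (coeff a) hpq
  simp [hp0, hq0] at coeff_eq

theorem X_pow_mul_monomial_mem_facetSymbPow_sup {a : σ →₀ ℕ} {F G : Finset σ}
    (hdisj : Disjoint F G) (hother : ∀ H ∈ 𝒮 \ {F}, H ≠ G → t ≤ degOff H a) (i : σ) :
    X i ^ t * monomial a (1 : k) ∈ facetSymbPow k {F} t ⊔ facetSymbPow k (𝒮 \ {F}) t := by
  rw [X_pow_eq_monomial, monomial_mul, one_mul]
  by_cases hi : i ∈ F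
  · refine Submodule.mem_sup_right (monomial_mem_facetSymbPow_iff.2 fun H hH => ?_)
    rw [map_add]
    rcases eq_or_ne H G with rfl | hHG
    · simp [degOff_single, Finset.disjoint_left.1 hdisj hi]
    · exact (hother H hH hHG).trans (Nat.le_add_left _ _)
  · refine Submodule.mem_sup_left (monomial_mem_facetSymbPow_iff.2 ?_)
    simp [degOff_single, hi]

/-- At the exponent `a` the degree complex has exactly the two disjoint facets `F` and `G`, hence
is disconnected. -/
theorem nontrivial_locCoh_one_facetSymbPow (h𝒮 : ∀ H ∈ 𝒮, H.Nonempty) {F G : Finset σ}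
    (hF : F ∈ 𝒮) (hG : G ∈ 𝒮) (hdisj : Disjoint F G) {a : σ →₀ ℕ} (hFa : degOff F a < t)
    (hGa : degOff G a < t) (hother : ∀ H ∈ 𝒮, H ≠ F → H ≠ G → t ≤ degOff H a) :
    Nontrivial (locCoh k (facetSymbPow k 𝒮 t) 1) := by
  have hGF : G ≠ F := fun h => (h𝒮 G hG).ne_empty (disjoint_self.1 (h.symm ▸ hdisj))
  obtain ⟨s, hs⟩ := exists_pow_span_range_le (X : σ → MvPolynomial σ k) t
  have pow_le_colon : maxIdeal k σ ^ s ≤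
      (facetSymbPow k {F} t ⊔ facetSymbPow k (𝒮 \ {F}) t).colon {monomial a (1 : k)} := by
    refine hs.trans (Ideal.span_le.2 ?_)
    rintro _ ⟨i, rfl⟩
    exact Submodule.mem_colon_singleton.2 <|
      X_pow_mul_monomial_mem_facetSymbPow_sup hdisj (fun H hH => hother H hH.1 hH.2) i
  rw [← Set.union_sdiff_cancel (Set.singleton_subset_iff.2 hF), facetSymbPow_union]
  exact nontrivial_localCohomology_one_of_mul_mem_sup
    (isSaturated_facetSymbPow fun H hH => h𝒮 H (hH ▸ hF))
    (isSaturated_facetSymbPow fun H hH => h𝒮 H hH.1)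
    (monomial_notMem_facetSymbPow_sup rfl hFa ⟨hG, hGF⟩ hGa)
    fun r hr => Submodule.mem_colon_singleton.1 (pow_le_colon hr)

end Nonvanishing

section ConnectedPair

variable {σ : Type} [Fintype σ] [DecidableEq σ] {Γ : SimpleGraph σ} {F G : Finset σ}

theorem IsIndep.exists_isMaxIndep_superset {S : Finset σ} (hS : IsIndep Γ S) :
    ∃ F, S ⊆ F ∧ IsMaxIndep Γ F := by
  obtain ⟨F, hSF, hF⟩ := (Set.toFinite {F | IsIndep Γ F}).exists_le_maximal hS
  exact ⟨F, hSF, hF.prop, fun G hG hFG => (hF.eq_of_le hG hFG).symm⟩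

theorem IsMaxIndep.exists_adj (hF : IsMaxIndep Γ F) {v : σ} (hv : v ∉ F) :
    ∃ u ∈ F, Γ.Adj v u := by
  by_contra! not_adj
  have insert_indep : IsIndep Γ (insert v F) := by
    intro i hi j hj hij
    rcases Finset.mem_insert.1 hi with rfl | hiF <;> rcases Finset.mem_insert.1 hj with rfl | hjF
    · exact Γ.irrefl hij
    · exact not_adj j hjF hij
    · exact not_adj i hiF hij.symm
    · exact hF.1 i hiF j hjF hij
  exact hv (hF.2 _ insert_indep (Finset.subset_insert v F) ▸ Finset.mem_insert_self v F)

theorem IsMaxIndep.nonempty [Nonempty σ] (hF : IsMaxIndep Γ F) : F.Nonempty := by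
  by_contra hempty
  obtain ⟨v⟩ := ‹Nonempty σ›
  obtain ⟨u, hu, -⟩ := hF.exists_adj (v := v) fun hv => hempty ⟨v, hv⟩
  exact hempty ⟨u, hu⟩

/-- Two disjoint maximal independent sets spanning a connected induced subgraph: the pairs in the
criterion for depth one. -/
structure ConnectedPair (Γ : SimpleGraph σ) (F G : Finset σ) : Prop where
  left : IsMaxIndep Γ F
  right : IsMaxIndep Γ G
  disjoint : Disjoint F G
  connected : (Γ.induce ((F ∪ G : Finset σ) : Set σ)).Connected

theorem ConnectedPair.symm (h : ConnectedPair Γ F G) : ConnectedPair Γ G F :=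
  ⟨h.right, h.left, h.disjoint.symm, Finset.union_comm F G ▸ h.connected⟩

theorem ConnectedPair.nonempty (h : ConnectedPair Γ F G) : Nonempty σ :=
  h.connected.nonempty.map Subtype.val

theorem exists_connectedPair_of_isMaxIndep_singleton (hiso : NoIsolated Γ) {i : σ}
    (hi : IsMaxIndep Γ {i}) : ∃ G, ConnectedPair Γ {i} G := by
  obtain ⟨j, hij⟩ := hiso i
  have singleton_indep : IsIndep Γ {j} := by simp [IsIndep]
  obtain ⟨G, hjG, hG⟩ := singleton_indep.exists_isMaxIndep_superset
  have hiG : i ∉ G := fun hiG => hG.1 i hiG j (hjG (Finset.mem_singleton_self j)) hij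
  refine ⟨G, hi, hG, Finset.disjoint_singleton_left.2 hiG, ?_⟩
  refine SimpleGraph.connected_iff_exists_forall_reachable _ |>.2 ⟨⟨i, by simp⟩, ?_⟩
  rintro ⟨v, hv⟩
  by_cases hvi : v ∈ ({i} : Finset σ)
  · obtain rfl := Finset.mem_singleton.1 hvi
    rfl
  · obtain ⟨u, hu, hvu⟩ := hi.exists_adj hvi
    obtain rfl := Finset.mem_singleton.1 hu
    exact SimpleGraph.Adj.reachable hvu.symm

end ConnectedPair

section DisconnectedUnion

theorem exists_adj_closed_of_not_connected {V : Type*} {Γ : SimpleGraph V} {U : Set V}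
    (hU : U.Nonempty) (h : ¬ (Γ.induce U).Connected) :
    ∃ C : Set V, (∃ a ∈ U, a ∈ C) ∧ (∃ b ∈ U, b ∉ C) ∧
      ∀ a ∈ U, ∀ b ∈ U, Γ.Adj a b → (a ∈ C ↔ b ∈ C) := by
  have := hU.to_subtype
  obtain ⟨u, v, huv⟩ : ∃ u v, ¬ (Γ.induce U).Reachable u v := by
    by_contra! hreach
    exact h ⟨hreach⟩
  refine ⟨Subtype.val '' {w | (Γ.induce U).Reachable u w}, ⟨u, u.2, u, .rfl, rfl⟩,
    ⟨v, v.2, fun ⟨w, huw, hwv⟩ => huv (Subtype.ext hwv ▸ huw)⟩, fun a ha b hb hab => ?_⟩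
  have reachable_ab : (Γ.induce U).Reachable ⟨a, ha⟩ ⟨b, hb⟩ := SimpleGraph.Adj.reachable hab
  simp only [Set.mem_image, Set.mem_ofPred_eq, Subtype.exists, exists_and_right, exists_eq_right]
  exact ⟨fun ⟨_, hua⟩ => ⟨hb, hua.trans reachable_ab⟩,
    fun ⟨_, hub⟩ => ⟨ha, hub.trans reachable_ab.symm⟩⟩

variable {σ : Type} [Fintype σ] [DecidableEq σ] {Γ : SimpleGraph σ} {F G H₁ H₂ C : Finset σ}

theorem IsIndep.inter_union_sdiff (hF : IsIndep Γ F) (hG : IsIndep Γ G)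
    (hC : ∀ a ∈ F ∪ G, ∀ b ∈ F ∪ G, Γ.Adj a b → (a ∈ C ↔ b ∈ C)) :
    IsIndep Γ (F ∩ C ∪ G \ C) := by
  intro i hi j hj hij
  have hCij := hC i (by grind) j (by grind) hij
  by_cases hiC : i ∈ C
  · exact hF i (by grind) j (by grind) hij
  · exact hG i (by grind) j (by grind) hij

theorem IsMaxIndep.exists_mem_of_adj_closed (hF : IsMaxIndep Γ F) {U : Finset σ} (hFU : F ⊆ U)
    {P : σ → Prop} (hP : ∀ a ∈ U, ∀ b ∈ U, Γ.Adj a b → (P a ↔ P b)) {a : σ} (ha : a ∈ U)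
    (hPa : P a) : ∃ b ∈ F, P b := by
  by_cases haF : a ∈ F
  · exact ⟨a, haF, hPa⟩
  · obtain ⟨b, hb, hab⟩ := hF.exists_adj haF
    exact ⟨b, hb, (hP a ha b (hFU hb) hab).1 hPa⟩

theorem degOff_add_degOff_le (hFG : Disjoint F G) (hsub : F ∪ G ⊆ H₁ ∪ H₂) (d : σ →₀ ℕ) :
    degOff H₁ d + degOff H₂ d ≤ degOff F d + degOff G d := by
  have sum_le : ∑ i ∈ F, d i + ∑ i ∈ G, d i ≤ ∑ i ∈ H₁, d i + ∑ i ∈ H₂, d i := by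
    rw [← Finset.sum_union hFG, ← Finset.sum_union_inter]
    exact (Finset.sum_le_sum_of_subset hsub).trans (Nat.le_add_right _ _)
  have := degOff_add_sum F d
  have := degOff_add_sum G d
  have := degOff_add_sum H₁ d
  have := degOff_add_sum H₂ d
  omega

/-- Exchanging `F` and `G` on a union of components of `Γ_{F ∪ G}` gives two independent sets
covering `F ∪ G`; one of their maximal extensions has small degree outside. -/
theorem exists_isMaxIndep_meeting_of_not_connected (hF : IsMaxIndep Γ F) (hG : IsMaxIndep Γ G)
    (hdisj : Disjoint F G) (hne : F.Nonempty)
    (hconn : ¬ (Γ.induce ((F ∪ G : Finset σ) : Set σ)).Connected) {t : ℕ} {d : σ →₀ ℕ}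
    (hFd : degOff F d < t) (hGd : degOff G d < t) :
    ∃ H, IsMaxIndep Γ H ∧ degOff H d < t ∧ ¬ Disjoint F H ∧ ¬ Disjoint H G := by
  obtain ⟨C, ⟨a, ha, haC⟩, ⟨b, hb, hbC⟩, hC⟩ :=
    exists_adj_closed_of_not_connected (hne.mono Finset.subset_union_left) hconn
  lift C to Finset σ using C.toFinite
  simp only [Finset.mem_coe] at ha haC hb hbC hC
  have hC' : ∀ a ∈ F ∪ G, ∀ b ∈ F ∪ G, Γ.Adj a b → (a ∉ C ↔ b ∉ C) :=
    fun a ha b hb hab => not_congr (hC a ha b hb hab)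
  obtain ⟨f₁, hf₁, hf₁C⟩ := hF.exists_mem_of_adj_closed Finset.subset_union_left hC ha haC
  obtain ⟨g₁, hg₁, hg₁C⟩ := hG.exists_mem_of_adj_closed Finset.subset_union_right hC ha haC
  obtain ⟨f₂, hf₂, hf₂C⟩ := hF.exists_mem_of_adj_closed Finset.subset_union_left hC' hb hbC
  obtain ⟨g₂, hg₂, hg₂C⟩ := hG.exists_mem_of_adj_closed Finset.subset_union_right hC' hb hbC
  obtain ⟨H₁, hsub₁, hH₁⟩ := (hF.1.inter_union_sdiff hG.1 hC).exists_isMaxIndep_superset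
  obtain ⟨H₂, hsub₂, hH₂⟩ :=
    (hG.1.inter_union_sdiff hF.1 (Finset.union_comm F G ▸ hC)).exists_isMaxIndep_superset
  have hcover : F ∪ G ⊆ H₁ ∪ H₂ := by grind
  have degOff_le := degOff_add_degOff_le hdisj hcover d
  rcases lt_or_ge (degOff H₁ d) t with hH₁d | hH₁d
  · exact ⟨H₁, hH₁, hH₁d, Finset.not_disjoint_iff.2 ⟨f₁, hf₁, hsub₁ (by grind)⟩,
      Finset.not_disjoint_iff.2 ⟨g₂, hsub₁ (by grind), hg₂⟩⟩
  · exact ⟨H₂, hH₂, by omega, Finset.not_disjoint_iff.2 ⟨f₂, hf₂, hsub₂ (by grind)⟩,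
      Finset.not_disjoint_iff.2 ⟨g₁, hsub₂ (by grind), hg₁⟩⟩

theorem hasLinkedFacets_of_forall_not_connectedPair (h : ∀ F G, ¬ ConnectedPair Γ F G) (t : ℕ) :
    HasLinkedFacets {F | IsMaxIndep Γ F} t := by
  intro d F hF G hG hFne _ hFd hGd
  by_cases hdisj : Disjoint F G
  · exact exists_isMaxIndep_meeting_of_not_connected hF hG hdisj hFne
      (fun hconn => h F G ⟨hF, hG, hdisj, hconn⟩) hFd hGd
  · exact ⟨F, hF, hFd, fun hFF => hFne.ne_empty (disjoint_self.1 hFF), hdisj⟩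

end DisconnectedUnion

section SpanningEdges

variable {V : Type*} {Γ : SimpleGraph V} {U : Finset V}

/-- `E` consists of edges of `Γ_U` and connects `U`. Connectedness is expressed by the property
that predicates which do not change along the edges in `E` are constant on `U`. -/
structure IsSpanningEdgeSet (Γ : SimpleGraph V) (U : Finset V) (E : Finset (Sym2 V)) : Prop where
  mem_left : ∀ {u v}, s(u, v) ∈ E → u ∈ U
  adj : ∀ {u v}, s(u, v) ∈ E → Γ.Adj u v
  iff_of_forall_iff : ∀ {Q : V → Prop}, (∀ u v, s(u, v) ∈ E → (Q u ↔ Q v)) →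
    ∀ {u}, u ∈ U → ∀ {v}, v ∈ U → (Q u ↔ Q v)

theorem IsSpanningEdgeSet.mem_right {E : Finset (Sym2 V)} (hE : IsSpanningEdgeSet Γ U E) {u v : V}
    (huv : s(u, v) ∈ E) : v ∈ U :=
  hE.mem_left (Sym2.eq_swap ▸ huv)

theorem exists_isSpanningEdgeSet (hU : (Γ.induce (U : Set V)).Connected) :
    ∃ E, IsSpanningEdgeSet Γ U E ∧ E.card + 1 = U.card := by
  classical
  obtain ⟨T, hTΓ, hT⟩ := hU.exists_isTree_le
  let E : Finset (Sym2 V) := T.edgeFinset.map (Function.Embedding.subtype _).sym2Map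
  have mem_of_adj {x y : (U : Set V)} (hxy : T.Adj x y) : s((x : V), (y : V)) ∈ E :=
    Finset.mem_map.2 ⟨s(x, y), SimpleGraph.mem_edgeFinset.2 hxy, rfl⟩
  have adj_of_mem {u v : V} (huv : s(u, v) ∈ E) : u ∈ U ∧ Γ.Adj u v := by
    obtain ⟨e, he, heuv⟩ := Finset.mem_map.1 huv
    induction e with | _ x y
    have hxy : Γ.Adj x y := hTΓ (SimpleGraph.mem_edgeFinset.1 he)
    rcases Sym2.eq_iff.1 heuv with ⟨rfl, rfl⟩ | ⟨rfl, rfl⟩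
    · exact ⟨x.2, hxy⟩
    · exact ⟨y.2, hxy.symm⟩
  have along_walk {Q : V → Prop} (hQ : ∀ u v, s(u, v) ∈ E → (Q u ↔ Q v)) {x y : (U : Set V)}
      (p : T.Walk x y) : Q x ↔ Q y := by
    induction p with
    | nil => rfl
    | cons hxy _ ih => exact (hQ _ _ (mem_of_adj hxy)).trans ih
  refine ⟨E, ⟨fun huv => (adj_of_mem huv).1, fun huv => (adj_of_mem huv).2,
    fun hQ u hu v hv => ?_⟩, ?_⟩
  · obtain ⟨p⟩ := hT.connected ⟨u, hu⟩ ⟨v, hv⟩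
    exact along_walk hQ p
  · rw [Finset.card_map, hT.card_edgeFinset]
    simp

end SpanningEdges

section EdgeExponent

variable {σ : Type} [Fintype σ] [DecidableEq σ] {Γ : SimpleGraph σ} {F G H : Finset σ}

/-- The exponent vector of the quadratic monomial `X u * X v` attached to an edge `s(u, v)`. -/
def edgeExponent (e : Sym2 σ) : σ →₀ ℕ :=
  e.lift ⟨fun u v => Finsupp.single u 1 + Finsupp.single v 1, fun _ _ => add_comm _ _⟩

theorem degOff_edgeExponent (H : Finset σ) (u v : σ) :
    degOff H (edgeExponent s(u, v)) = (if u ∈ H then 0 else 1) + if v ∈ H then 0 else 1 := by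
  simp [edgeExponent, degOff_single]

theorem degOff_edgeExponent_eq_one_iff {u v : σ} :
    degOff H (edgeExponent s(u, v)) = 1 ↔ (u ∈ H ↔ v ∉ H) := by
  grind [degOff_edgeExponent]

theorem IsIndep.one_le_degOff_edgeExponent (hH : IsIndep Γ H) {u v : σ} (huv : Γ.Adj u v) :
    1 ≤ degOff H (edgeExponent s(u, v)) := by
  grind [degOff_edgeExponent, hH u]

theorem ConnectedPair.mem_iff_notMem_of_adj (h : ConnectedPair Γ F G) {u v : σ} (hu : u ∈ F ∪ G)
    (hv : v ∈ F ∪ G) (huv : Γ.Adj u v) : u ∈ F ↔ v ∉ F :=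
  ⟨fun huF hvF => h.left.1 u huF v hvF huv, fun hvF => by_contra fun huF =>
    h.right.1 u ((Finset.mem_union.1 hu).resolve_left huF) v
      ((Finset.mem_union.1 hv).resolve_left hvF) huv⟩

theorem ConnectedPair.degOff_edgeExponent_eq_one (h : ConnectedPair Γ F G) {u v : σ}
    (hu : u ∈ F ∪ G) (hv : v ∈ F ∪ G) (huv : Γ.Adj u v) :
    degOff F (edgeExponent s(u, v)) = 1 ∧ degOff G (edgeExponent s(u, v)) = 1 := by
  refine ⟨degOff_edgeExponent_eq_one_iff.2 (h.mem_iff_notMem_of_adj hu hv huv),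
    degOff_edgeExponent_eq_one_iff.2 ?_⟩
  rw [Finset.union_comm] at hu hv
  exact h.symm.mem_iff_notMem_of_adj hu hv huv

theorem ConnectedPair.eq_or_eq_of_degOff_edgeExponent_eq_one (h : ConnectedPair Γ F G)
    {E : Finset (Sym2 σ)} (hE : IsSpanningEdgeSet Γ (F ∪ G) E) (hH : IsIndep Γ H)
    (hHE : ∀ e ∈ E, degOff H (edgeExponent e) = 1) : H = F ∨ H = G := by
  let AgreesWithF (w : σ) : Prop := w ∈ H ↔ w ∈ F
  have agrees_iff (u v) (huv : s(u, v) ∈ E) : AgreesWithF u ↔ AgreesWithF v := by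
    have mem_H := degOff_edgeExponent_eq_one_iff.1 (hHE _ huv)
    have mem_F := h.mem_iff_notMem_of_adj (hE.mem_left huv) (hE.mem_right huv) (hE.adj huv)
    tauto
  by_cases hagree : ∃ w ∈ F ∪ G, AgreesWithF w
  · obtain ⟨w, hw, hwF⟩ := hagree
    refine .inl (h.left.2 H hH fun v hv => ?_)
    exact ((hE.iff_of_forall_iff agrees_iff hw (Finset.mem_union_left G hv)).1 hwF).2 hv
  · refine .inr (h.right.2 H hH fun v hv => by_contra fun hvH => ?_)
    exact hagree ⟨v, Finset.mem_union_right F hv,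
      iff_of_false hvH (Finset.disjoint_right.1 h.disjoint hv)⟩

theorem ConnectedPair.card_lt_sum_degOff_edgeExponent (h : ConnectedPair Γ F G)
    {E : Finset (Sym2 σ)} (hE : IsSpanningEdgeSet Γ (F ∪ G) E) (hH : IsIndep Γ H) (hHF : H ≠ F)
    (hHG : H ≠ G) : E.card < ∑ e ∈ E, degOff H (edgeExponent e) := by
  have one_le (e) (he : e ∈ E) : 1 ≤ degOff H (edgeExponent e) := by
    induction e with | _ u v
    exact hH.one_le_degOff_edgeExponent (hE.adj he)
  obtain ⟨e, he, hne⟩ : ∃ e ∈ E, degOff H (edgeExponent e) ≠ 1 := by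
    by_contra! hall
    exact (h.eq_or_eq_of_degOff_edgeExponent_eq_one hE hH hall).elim hHF hHG
  rw [Finset.card_eq_sum_ones]
  exact Finset.sum_lt_sum one_le ⟨e, he, (one_le e he).lt_of_ne' hne⟩

/-- The exponent of a power of one edge times the product of the edges of a spanning tree: an
independent set omits at least one end of each factor, and `F` and `G` are the only maximal ones
that omit exactly one end each time. -/
theorem ConnectedPair.exists_exponent (h : ConnectedPair Γ F G) {t : ℕ}
    (ht : F.card + G.card ≤ t) :
    ∃ a : σ →₀ ℕ, degOff F a < t ∧ degOff G a < t ∧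
      ∀ H, IsMaxIndep Γ H → H ≠ F → H ≠ G → t ≤ degOff H a := by
  have := h.nonempty
  obtain ⟨E, hE, hEcard⟩ := exists_isSpanningEdgeSet h.connected
  rw [Finset.card_union_of_disjoint h.disjoint] at hEcard
  obtain ⟨x, hx⟩ := h.left.nonempty
  obtain ⟨y, hy, hxy⟩ := h.right.exists_adj (Finset.disjoint_left.1 h.disjoint hx)
  obtain ⟨n, rfl⟩ := Nat.exists_eq_add_of_le ht
  let a := ∑ e ∈ E, edgeExponent e + n • edgeExponent s(x, y)
  have degOff_a (K : Finset σ) : degOff K a =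
      ∑ e ∈ E, degOff K (edgeExponent e) + n * degOff K (edgeExponent s(x, y)) := by
    simp only [a, map_add, map_sum, map_nsmul, smul_eq_mul]
  have degOff_a_eq {K : Finset σ} (hK : ∀ {u v}, u ∈ F ∪ G → v ∈ F ∪ G → Γ.Adj u v →
      degOff K (edgeExponent s(u, v)) = 1) : degOff K a = E.card + n := by
    have eq_one (e) (he : e ∈ E) : degOff K (edgeExponent e) = 1 := by
      induction e with | _ u v
      exact hK (hE.mem_left he) (hE.mem_right he) (hE.adj he)
    rw [degOff_a, hK (Finset.mem_union_left G hx) (Finset.mem_union_right F hy) hxy,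
      Finset.sum_congr rfl eq_one, Finset.card_eq_sum_ones, mul_one]
  have hFa := degOff_a_eq fun hu hv huv => (h.degOff_edgeExponent_eq_one hu hv huv).1
  have hGa := degOff_a_eq fun hu hv huv => (h.degOff_edgeExponent_eq_one hu hv huv).2
  refine ⟨a, by omega, by omega, fun H hH hHF hHG => ?_⟩
  have card_lt := h.card_lt_sum_degOff_edgeExponent hE hH.1 hHF hHG
  have n_le := Nat.le_mul_of_pos_right n (hH.1.one_le_degOff_edgeExponent hxy)
  rw [degOff_a]
  omega

end EdgeExponent

section Depth

variable {k : Type} [Field k] {σ : Type}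

theorem nontrivial_locCoh_of_rDepth_eq_succ {J : Ideal (MvPolynomial σ k)} {i : ℕ}
    (h : rDepth k J = i + 1) : Nontrivial (locCoh k J (i + 1)) :=
  h ▸ Nat.sInf_mem (Nat.nonempty_of_sInf_eq_succ h)

theorem rDepth_eq_one {J : Ideal (MvPolynomial σ k)} (h₀ : Subsingleton (locCoh k J 0))
    (h₁ : Nontrivial (locCoh k J 1)) : rDepth k J = 1 := by
  refine le_antisymm (Nat.sInf_le h₁) (Nat.one_le_iff_ne_zero.2 fun h => ?_)
  rcases Nat.sInf_eq_zero.1 h with hzero | hempty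
  · exact not_nontrivial_iff_subsingleton.2 h₀ hzero
  · exact (hempty ▸ h₁ : 1 ∈ (∅ : Set ℕ))

variable [Fintype σ] [DecidableEq σ] {Γ : SimpleGraph σ} {F G : Finset σ} {t : ℕ}

theorem exists_connectedPair_of_rDepth_symbPow_eq_one (hiso : NoIsolated Γ)
    (h : rDepth k (symbPow k Γ t) = 1) : ∃ F G, ConnectedPair Γ F G := by
  by_contra! hno
  have not_singleton (i : σ) : {i} ∉ {F | IsMaxIndep Γ F} := fun hi =>
    have ⟨G, hG⟩ := exists_connectedPair_of_isMaxIndep_singleton hiso hi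
    hno {i} G hG
  exact not_nontrivial_iff_subsingleton.2 (subsingleton_locCoh_one_facetSymbPow not_singleton
    (hasLinkedFacets_of_forall_not_connectedPair hno t)) (nontrivial_locCoh_of_rDepth_eq_succ h)

theorem ConnectedPair.rDepth_symbPow_eq_one (h : ConnectedPair Γ F G)
    (ht : F.card + G.card ≤ t) : rDepth k (symbPow k Γ t) = 1 := by
  have := h.nonempty
  have nonempty (H) (hH : H ∈ {F | IsMaxIndep Γ F}) : H.Nonempty := IsMaxIndep.nonempty hH
  obtain ⟨a, hFa, hGa, hother⟩ := h.exists_exponent ht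
  exact rDepth_eq_one (isSaturated_facetSymbPow nonempty).subsingleton_localCohomology_zero
    (nontrivial_locCoh_one_facetSymbPow nonempty h.left h.right h.disjoint hFa hGa hother)

end Depth

theorem stmt6_general (k : Type) [Field k] {σ : Type} [Fintype σ] [DecidableEq σ]
    (Γ : SimpleGraph σ) (hiso : NoIsolated Γ) :
    ((∃ t : ℕ, 1 ≤ t ∧ rDepth k (symbPow k Γ t) = 1) ↔
      ∃ F G : Finset σ, IsMaxIndep Γ F ∧ IsMaxIndep Γ G ∧ Disjoint F G ∧
        (Γ.induce ((F ∪ G : Finset σ) : Set σ)).Connected) ∧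
    (∀ F G : Finset σ, IsMaxIndep Γ F → IsMaxIndep Γ G → Disjoint F G →
      (Γ.induce ((F ∪ G : Finset σ) : Set σ)).Connected →
      ∀ t : ℕ, F.card + G.card ≤ t → rDepth k (symbPow k Γ t) = 1) := by
  refine ⟨⟨?_, ?_⟩, ?_⟩
  · rintro ⟨t, -, ht⟩
    obtain ⟨F, G, h⟩ := exists_connectedPair_of_rDepth_symbPow_eq_one hiso ht
    exact ⟨F, G, h.left, h.right, h.disjoint, h.connected⟩
  · rintro ⟨F, G, hF, hG, hdisj, hconn⟩
    have h : ConnectedPair Γ F G := ⟨hF, hG, hdisj, hconn⟩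
    have := h.nonempty
    have card_pos : 1 ≤ F.card + G.card := Nat.le_add_right_of_le hF.nonempty.card_pos
    exact ⟨F.card + G.card, card_pos, h.rDepth_symbPow_eq_one le_rfl⟩
  · intro F G hF hG hdisj hconn t ht
    exact ConnectedPair.rDepth_symbPow_eq_one ⟨hF, hG, hdisj, hconn⟩ ht

/-- Let `Γ` be a connected graph. There exists `t ≥ 1` with
`depth R/I^{(t)} = 1` if and only if `Γ` has two disjoint maximal independent sets
`F, G` with `Γ_{F ∪ G}` connected; in this case `depth R/I^{(t)} = 1` for all
`t ≥ |F| + |G|`. -/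
theorem stmt6 (k : Type) [Field k] (n : ℕ) (Γ : SimpleGraph (Fin n))
    (hiso : NoIsolated Γ) (hconn : Γ.Connected) :
    ((∃ t : ℕ, 1 ≤ t ∧ rDepth k (symbPow k Γ t) = 1) ↔
      ∃ F G : Finset (Fin n), IsMaxIndep Γ F ∧ IsMaxIndep Γ G ∧ Disjoint F G ∧
        (Γ.induce ((F ∪ G : Finset (Fin n)) : Set (Fin n))).Connected) ∧
    (∀ F G : Finset (Fin n), IsMaxIndep Γ F → IsMaxIndep Γ G → Disjoint F G →
      (Γ.induce ((F ∪ G : Finset (Fin n)) : Set (Fin n))).Connected →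
      ∀ t : ℕ, F.card + G.card ≤ t → rDepth k (symbPow k Γ t) = 1) :=
  stmt6_general k Γ hiso

end
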